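/- Let n ≥ 1 and let Q be a nondegenerate quadratic form on ℝⁿ of signature (p, q) with p ≥ 1 and p + q = n, with polar bilinear form B. Let w ∈ ℝⁿ satisfy Q(w) > 0. Then the set K_w = {v ∈ ℝⁿ : Q(v) > 0 and B(v, w) > 0}, equipped with the subspace topology, is an open, nonempty and contractible subset of ℝⁿ. -/

import Mathlib

set_option linter.unusedSectionVars false

/-- A real quadratic form on `ℝⁿ` is continuous. -/
theorem QuadraticForm.continuous_of_pi {ι : Type*} [Fintype ι]
    (Q : QuadraticForm ℝ (ι → ℝ)) : Continuous Q := by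
  have h : ⇑Q = fun v => QuadraticMap.associated (R := ℝ) Q v v := by
    ext v
    rw [QuadraticMap.associated_eq_self_apply]
  rw [h]
  exact (LinearMap.continuous_of_finiteDimensional
    (LinearMap.toContinuousLinearMap.toLinearMap ∘ₗ
      QuadraticMap.associated (R := ℝ) Q)).clm_apply continuous_id

/-- The value of a quadratic form on a linear combination of two vectors. -/
theorem QuadraticForm.map_smul_add_smul {R M : Type*} [CommRing R] [AddCommGroup M] [Module R M]
    (Q : QuadraticForm R M) (a b : R) (x y : M) :
    Q (a • x + b • y) = a * a * Q x + b * b * Q y + a * b * QuadraticMap.polar Q x y := by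
  rw [QuadraticMap.map_add Q, QuadraticMap.map_smul, QuadraticMap.map_smul,
    QuadraticMap.polar_smul_left, QuadraticMap.polar_smul_right]
  simp only [smul_eq_mul]
  ring

/-- The chamber of a vector `w` with `Q w > 0` is star-shaped about `w`. -/
theorem QuadraticForm.starConvex_chamber {E : Type*} [AddCommGroup E] [Module ℝ E]
    (Q : QuadraticForm ℝ E) {w : E} (hw : 0 < Q w) :
    StarConvex ℝ w {v : E | 0 < Q v ∧ 0 < QuadraticMap.polar Q v w / 2} := by
  rintro v ⟨hv, hvw⟩ a b ha hb hab
  have hvw' : 0 < QuadraticMap.polar Q v w := by linarith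
  have hww : QuadraticMap.polar Q w w = 2 * Q w := by
    simp [QuadraticMap.polar_self]
  constructor
  · rw [QuadraticForm.map_smul_add_smul, QuadraticMap.polar_comm Q w v]
    have hprod : 0 ≤ a * b * QuadraticMap.polar Q v w := by positivity
    rcases ha.eq_or_lt with rfl | ha
    · obtain rfl : b = 1 := by linarith
      simpa using hv
    · have : 0 < a * a * Q w := by positivity
      have : 0 ≤ b * b * Q v := by positivity
      linarith
  · rw [QuadraticMap.polar_add_left, QuadraticMap.polar_smul_left,
      QuadraticMap.polar_smul_left, hww]
    simp only [smul_eq_mul]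
    rcases ha.eq_or_lt with rfl | ha
    · obtain rfl : b = 1 := by linarith
      simpa using hvw
    · positivity

/-- for a nondegenerate quadratic form `Q` of signature `(p,q)` on `ℝⁿ`
(`p ≥ 1`, `p + q = n`) and `w` with `Q(w) > 0`, the chamber
`K_w = {v : Q(v) > 0 and B(v,w) > 0}` (where `B` is the polar form of `Q` divided by 2)
is an open, nonempty and contractible subset of `ℝⁿ`. -/
theorem positive_cone_chamber_contractible
    (n p q : ℕ) (hn : 1 ≤ n) (hp : 1 ≤ p) (hpq : p + q = n)
    (Q : QuadraticForm ℝ (Fin n → ℝ))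
    (hnondeg : ∀ v : Fin n → ℝ, (∀ u : Fin n → ℝ, QuadraticMap.polar ⇑Q v u = 0) → v = 0)
    (P N : Submodule ℝ (Fin n → ℝ)) (hcompl : IsCompl P N)
    (hdimP : Module.finrank ℝ P = p) (hdimN : Module.finrank ℝ N = q)
    (horth : ∀ v ∈ P, ∀ u ∈ N, QuadraticMap.polar ⇑Q v u = 0)
    (hpos : ∀ v ∈ P, v ≠ 0 → 0 < Q v)
    (hneg : ∀ u ∈ N, u ≠ 0 → Q u < 0)
    (w : Fin n → ℝ) (hw : 0 < Q w) :
    IsOpen {v : Fin n → ℝ | 0 < Q v ∧ 0 < QuadraticMap.polar ⇑Q v w / 2} ∧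
    {v : Fin n → ℝ | 0 < Q v ∧ 0 < QuadraticMap.polar ⇑Q v w / 2}.Nonempty ∧
    ContractibleSpace {v : Fin n → ℝ | 0 < Q v ∧ 0 < QuadraticMap.polar ⇑Q v w / 2} := by
  have hQ : Continuous Q := Q.continuous_of_pi
  have hne : {v : Fin n → ℝ | 0 < Q v ∧ 0 < QuadraticMap.polar ⇑Q v w / 2}.Nonempty := by
    refine ⟨w, hw, ?_⟩
    rw [QuadraticMap.polar_self]
    simpa using hw
  refine ⟨?_, hne, (QuadraticForm.starConvex_chamber Q hw).contractibleSpace hne⟩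
  have hpolar : Continuous fun v => QuadraticMap.polar Q v w / 2 := by
    unfold QuadraticMap.polar
    fun_prop
  exact (isOpen_lt continuous_const hQ).and (isOpen_lt continuous_const hpolar)
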